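/- The semigroup algebra k[S(X,Ω)] is the free Ω-operated nonunital k-algebra on X. Precisely: for every associative nonunital k-algebra A, every family of k-linear maps β_ω : A → A (ω ∈ Ω), and every map f : X → A, there exists a unique homomorphism of nonunital k-algebras φ : k[S(X,Ω)] → A such that φ(x) = f(x) for every x ∈ X and φ(P_ω(w)) = β_ω(φ(w)) for every w ∈ S(X,Ω) and every ω ∈ Ω (where elements of S(X,Ω) are viewed as basis elements of k[S(X,Ω)]). -/

import Mathlib

/-- The left bracket letter `⌊_ω` as a one-letter word. -/
def lbr {X Ω : Type*} (ω : Ω) : FreeMonoid (X ⊕ (Ω ⊕ Ω)) :=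
  FreeMonoid.of (Sum.inr (Sum.inl ω))

/-- The right bracket letter `⌋_ω` as a one-letter word. -/
def rbr {X Ω : Type*} (ω : Ω) : FreeMonoid (X ⊕ (Ω ⊕ Ω)) :=
  FreeMonoid.of (Sum.inr (Sum.inr ω))

/-- The operator `P_ω` on the free monoid: `P_ω w = ⌊_ω w ⌋_ω`. -/
def Pop {X Ω : Type*} (ω : Ω) (w : FreeMonoid (X ⊕ (Ω ⊕ Ω))) : FreeMonoid (X ⊕ (Ω ⊕ Ω)) :=
  lbr ω * w * rbr ω

/-- `S(X,Ω)`: the smallest subset of the free monoid containing all one-letter words `x`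
(`x ∈ X`), closed under concatenation and all operators `P_ω`. -/
inductive IsSW (X Ω : Type*) : FreeMonoid (X ⊕ (Ω ⊕ Ω)) → Prop
  | letter (x : X) : IsSW X Ω (FreeMonoid.of (Sum.inl x))
  | mul {u v : FreeMonoid (X ⊕ (Ω ⊕ Ω))} : IsSW X Ω u → IsSW X Ω v → IsSW X Ω (u * v)
  | op (ω : Ω) {u : FreeMonoid (X ⊕ (Ω ⊕ Ω))} : IsSW X Ω u → IsSW X Ω (Pop ω u)

/-- `S(X,Ω)` as a subsemigroup of the free monoid. -/
def SWsub (X Ω : Type*) : Subsemigroup (FreeMonoid (X ⊕ (Ω ⊕ Ω))) where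
  carrier := {w | IsSW X Ω w}
  mul_mem' := fun h1 h2 => IsSW.mul h1 h2

/-- The operator `P_ω` restricted to `S(X,Ω)`. -/
def PopSub {X Ω : Type*} (ω : Ω) (w : SWsub X Ω) : SWsub X Ω :=
  ⟨Pop ω w.1, IsSW.op ω w.2⟩

/-- The natural map `j_X : X → S(X,Ω)`. -/
def jSW {X Ω : Type*} (x : X) : SWsub X Ω :=
  ⟨FreeMonoid.of (Sum.inl x), IsSW.letter x⟩

/-!
A word in `S(X,Ω)` is evaluated in a semigroup `S` with operators `β` by a stack machine reading it
from right to left: `⌋_ω` opens a new accumulator on the stack, a letter `x` left-multiplies the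
current accumulator by `f x`, and `⌊_ω` closes the current accumulator, applies `β ω` to it and
left-multiplies the one below by the result. Every word in `S(X,Ω)` left-multiplies the current
accumulator by an element of `S` and leaves the rest of the stack alone. As the machine reads words
letter by letter, this element does not depend on how the word was built, so `S(X,Ω)` is the free
`Ω`-operated semigroup on `X`. The universal property of semigroup algebras then passes from
semigroups to algebras.
-/

section Mul

variable {X Ω S : Type*} [Mul S] (β : Ω → S → S) (f : X → S)

/-- The effect of one letter on the stack of the evaluation machine, which reads words from right to
left. Accumulators live in `WithOne S`, since a freshly opened one has no value in `S` yet.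
The values on `⌊_ω ⌋_ω` and on stacks that are too short are junk. -/
def stackStep : X ⊕ (Ω ⊕ Ω) → Function.End (List (WithOne S))
  | .inl x, c :: s => (f x * c) :: s
  | .inr (.inl ω), c :: d :: s => (WithOne.recOneCoe 1 (fun a ↦ (β ω a : WithOne S)) c * d) :: s
  | .inr (.inr _), s => 1 :: s
  | _, s => s

/-- The action of words on stacks, in which the rightmost letter acts first. -/
def stackAction : FreeMonoid (X ⊕ (Ω ⊕ Ω)) →* Function.End (List (WithOne S)) :=
  FreeMonoid.lift (stackStep β f)

/-- The word `w` has value `a` if it acts on every nonempty stack by multiplying the top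
accumulator by `a` on the left. -/
def HasValue (w : FreeMonoid (X ⊕ (Ω ⊕ Ω))) (a : S) : Prop :=
  ∀ (c : WithOne S) (s : List (WithOne S)), stackAction β f w (c :: s) = (a * c) :: s

namespace HasValue

variable {β f}

theorem unique {w : FreeMonoid (X ⊕ (Ω ⊕ Ω))} {a b : S} (ha : HasValue β f w a)
    (hb : HasValue β f w b) : a = b := by
  simpa using (ha 1 []).symm.trans (hb 1 [])

variable (β f) in
theorem letter (x : X) : HasValue β f (FreeMonoid.of (Sum.inl x)) (f x) :=
  fun _ _ ↦ rfl

theorem op (ω : Ω) {u : FreeMonoid (X ⊕ (Ω ⊕ Ω))} {a : S} (ha : HasValue β f u a) :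
    HasValue β f (Pop ω u) (β ω a) := fun c s ↦
  calc stackAction β f (Pop ω u) (c :: s)
    _ = stackAction β f (lbr ω) (stackAction β f u (1 :: c :: s)) := by
      rw [Pop, map_mul, map_mul]; rfl
    _ = stackAction β f (lbr ω) (a :: c :: s) := by rw [ha, mul_one]
    _ = (β ω a * c) :: s := rfl

end HasValue

end Mul

section Semigroup

variable {X Ω S : Type*} [Semigroup S] (β : Ω → S → S) (f : X → S)

variable {β f} in
theorem HasValue.mul {u v : FreeMonoid (X ⊕ (Ω ⊕ Ω))} {a b : S} (ha : HasValue β f u a)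
    (hb : HasValue β f v b) : HasValue β f (u * v) (a * b) := fun c s ↦
  calc stackAction β f (u * v) (c :: s)
    _ = stackAction β f u (stackAction β f v (c :: s)) := by rw [map_mul]; rfl
    _ = (a * (b * c)) :: s := by rw [hb, ha]
    _ = ((a * b : S) * c) :: s := by rw [WithOne.coe_mul, mul_assoc]

theorem IsSW.exists_hasValue {w : FreeMonoid (X ⊕ (Ω ⊕ Ω))} (hw : IsSW X Ω w) :
    ∃ a, HasValue β f w a := by
  induction hw with
  | letter x => exact ⟨f x, .letter β f x⟩
  | mul _ _ hu hv =>
    obtain ⟨a, ha⟩ := hu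
    obtain ⟨b, hb⟩ := hv
    exact ⟨a * b, ha.mul hb⟩
  | op ω _ hu =>
    obtain ⟨a, ha⟩ := hu
    exact ⟨β ω a, ha.op ω⟩

end Semigroup

namespace SWsub

variable {X Ω S : Type*}

theorem mulHom_ext_of_operated [Mul S] {β : Ω → S → S} {g h : SWsub X Ω →ₙ* S}
    (hg : ∀ ω w, g (PopSub ω w) = β ω (g w)) (hh : ∀ ω w, h (PopSub ω w) = β ω (h w))
    (hgh : ∀ x, g (jSW x) = h (jSW x)) : g = h := by
  ext ⟨w, hw⟩
  induction hw with
  | letter x => exact hgh x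
  | mul hu hv ihu ihv =>
    change g (⟨_, hu⟩ * ⟨_, hv⟩) = h (⟨_, hu⟩ * ⟨_, hv⟩)
    rw [map_mul, map_mul, ihu, ihv]
  | op ω hu ih =>
    change g (PopSub ω ⟨_, hu⟩) = h (PopSub ω ⟨_, hu⟩)
    rw [hg, hh, ih]

variable [Semigroup S] (β : Ω → S → S) (f : X → S)

/-- The extension of `f : X → S` to a homomorphism from `S(X,Ω)` that intertwines the `P_ω` with
the `β ω`; it sends a word to its value under the evaluation machine. -/
noncomputable def lift : SWsub X Ω →ₙ* S where
  toFun w := (w.2.exists_hasValue β f).choose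
  map_mul' u v := ((u * v).2.exists_hasValue β f).choose_spec.unique <|
    (u.2.exists_hasValue β f).choose_spec.mul (v.2.exists_hasValue β f).choose_spec

theorem hasValue_lift (w : SWsub X Ω) : HasValue β f w (lift β f w) :=
  (w.2.exists_hasValue β f).choose_spec

theorem lift_jSW (x : X) : lift β f (jSW x) = f x :=
  (hasValue_lift β f (jSW x)).unique (.letter β f x)

theorem lift_popSub (ω : Ω) (w : SWsub X Ω) : lift β f (PopSub ω w) = β ω (lift β f w) :=
  (hasValue_lift β f (PopSub ω w)).unique ((hasValue_lift β f w).op ω)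

theorem existsUnique_operated_mulHom :
    ∃! g : SWsub X Ω →ₙ* S,
      (∀ x, g (jSW x) = f x) ∧ ∀ ω w, g (PopSub ω w) = β ω (g w) :=
  ⟨lift β f, ⟨lift_jSW β f, lift_popSub β f⟩, fun _ ⟨hg_letter, hg_op⟩ ↦
    mulHom_ext_of_operated hg_op (lift_popSub β f) fun x ↦
      (hg_letter x).trans (lift_jSW β f x).symm⟩

end SWsub

theorem semigroupAlgebra_free_operated_nonunital_algebra_general
    (k : Type*) [Semiring k] {X Ω A : Type*}
    [NonUnitalSemiring A] [Module k A] [SMulCommClass k A A] [IsScalarTower k A A]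
    (β : Ω → A → A) (f : X → A) :
    ∃! φ : MonoidAlgebra k (SWsub X Ω) →ₙₐ[k] A,
      (∀ x, φ (MonoidAlgebra.single (jSW x) 1) = f x) ∧
      ∀ ω w, φ (MonoidAlgebra.single (PopSub ω w) 1) = β ω (φ (MonoidAlgebra.single w 1)) :=
  (MonoidAlgebra.liftMagma k).existsUnique_congr_left.mp (SWsub.existsUnique_operated_mulHom β f)

/-- The semigroup algebra `k[S(X,Ω)]` is the free `Ω`-operated nonunital `k`-algebra on `X`:
for every associative nonunital `k`-algebra `A`, family of `k`-linear maps `β_ω : A → A` and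
map `f : X → A`, there is a unique homomorphism of nonunital `k`-algebras
`φ : k[S(X,Ω)] → A` with `φ x = f x` for all `x ∈ X` and `φ (P_ω w) = β_ω (φ w)` for all
`w ∈ S(X,Ω)`, `ω ∈ Ω` (elements of `S(X,Ω)` being viewed as basis elements of `k[S(X,Ω)]`). -/
theorem semigroupAlgebra_free_operated_nonunital_algebra
    (k : Type*) [CommRing k] (X Ω : Type*) [Nonempty X] [Nonempty Ω]
    (A : Type*) [NonUnitalSemiring A] [Module k A] [SMulCommClass k A A] [IsScalarTower k A A]
    (β : Ω → A →ₗ[k] A) (f : X → A) :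
    ∃! φ : MonoidAlgebra k ↥(SWsub X Ω) →ₙₐ[k] A,
      (∀ x : X, φ (MonoidAlgebra.single (jSW x) (1 : k)) = f x) ∧
      ∀ (ω : Ω) (w : SWsub X Ω),
        φ (MonoidAlgebra.single (PopSub ω w) (1 : k)) =
          β ω (φ (MonoidAlgebra.single w (1 : k))) :=
  semigroupAlgebra_free_operated_nonunital_algebra_general k (fun ω ↦ β ω) f
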